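/- Let Λ = Hom(M_amb, ℝ_{>0}) where X* is a finitely generated free abelian group (written multiplicatively via characters), and let C ⊂ Λ = Hom(X*, ℝ_{>0}) be a strictly convex rational polyhedral cone, with M = {χ ∈ X* : ⟨χ,u⟩ ≤ 1 for all u ∈ C} the associated semigroup. Then the canonical map C → Hom_Mon(M, (0,1]), u ↦ (χ ↦ ⟨χ,u⟩), is a bijection onto the set of monoid homomorphisms from (M,·,1) to ((0,1],·,1), and the space C̄ = Hom_Mon(M,[0,1]) (with the topology of pointwise convergence) is compact and contains the image of C as a dense subset. -/

import Mathlib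

/-!
In logarithmic coordinates a point of `Hom(X, ℝ_{>0})` is an additive map `v : X →+ ℝ`, and `C`
becomes the polar cone of `M`. Since `M` generates `X`, the logarithm of a positive homomorphism on
`M` extends uniquely to `X`; this is the bijection.

For density, test a homomorphism `f : M → [0, 1]` on finitely many `xᵢ ∈ M`. If no point of the cone
approximates the values `f xᵢ`, Hahn–Banach gives a vector `c` with `∑ cᵢ v(xᵢ) ≤ 0` on the cone and
`∑ cᵢ yᵢ > 0` for every `y` with `exp yᵢ` close to `f xᵢ`; letting `yᵢ → -∞` shows `cᵢ ≤ 0` whenever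
`f xᵢ = 0`. As `v(xᵢ) ≤ 0`, rounding `N c` up keeps it nonpositive on the cone, so biduality puts
`∑ ⌈N cᵢ⌉ xᵢ` in `M`. Evaluating `f` there forces `⌈N cᵢ⌉ = 0` whenever `f xᵢ = 0`, and
`∑ ⌈N cᵢ⌉ log (f xᵢ) ≤ 0`. Dividing by `N → ∞` gives `∑ cᵢ log (f xᵢ) ≤ 0`, a contradiction.
-/

open Filter Topology Matrix

lemma bijOn_image_of_comp {α β γ : Type*} {f : α → β} {g : β → γ} {s : Set α} {t : Set γ}
    (h : Set.BijOn (g ∘ f) s t) : Set.BijOn g (f '' s) t :=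
  ⟨Set.mapsTo_image_iff.2 h.mapsTo, h.injOn.image_of_comp,
    h.surjOn.trans_eq (Set.image_comp g f s)⟩

lemma mem_closure_of_forall_restrict {κ : Type*} {α : κ → Type*} [∀ i, TopologicalSpace (α i)]
    {S : Set (∀ i, α i)} {f : ∀ i, α i}
    (h : ∀ I : Finset κ, I.restrict f ∈ closure (I.restrict '' S)) : f ∈ closure S := by
  refine mem_closure_iff.2 fun o ho hfo => ?_
  obtain ⟨I, U, hU, hIU⟩ := isOpen_pi_iff.1 ho f hfo
  obtain ⟨_, hgU, g, hgS, rfl⟩ := mem_closure_iff.1 (h I) (Set.univ.pi fun i : I => U i)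
    (isOpen_set_pi Set.finite_univ fun i _ => (hU i i.2).1) fun i _ => (hU i i.2).2
  exact ⟨g, hIU fun i hi => hgU ⟨i, hi⟩ trivial, hgS⟩

section OrderedField

variable {K : Type*} [Field K] [LinearOrder K] [IsStrictOrderedRing K]

lemma nonneg_of_forall_le_add_mul {a b s : K} (h : ∀ t ≥ 0, s ≤ a + t * b) : 0 ≤ b := by
  by_contra! hb
  have hlim : Tendsto (fun t : K => a + t * b) atTop atBot :=
    tendsto_atBot_add_const_left _ _ (tendsto_id.atTop_mul_const_of_neg hb)
  obtain ⟨t, ht, hlt⟩ := ((eventually_ge_atTop 0).and (hlim.eventually_lt_atBot s)).exists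
  exact hlt.not_ge (h t ht)

lemma tendsto_ceil_natCast_mul_div [TopologicalSpace K] [OrderTopology K] [FloorRing K] (a : K) :
    Tendsto (fun N : ℕ => (⌈N * a⌉ : K) / N) atTop (𝓝 a) := by
  have := FloorRing.archimedean K
  have hub : Tendsto (fun N : ℕ => a + (N : K)⁻¹) atTop (𝓝 a) := by
    simpa using (tendsto_inv_atTop_zero.comp tendsto_natCast_atTop_atTop).const_add a
  refine tendsto_of_tendsto_of_tendsto_of_le_of_le' tendsto_const_nhds hub ?_ ?_ <;>
    filter_upwards [eventually_gt_atTop 0] with N hN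
  · rw [le_div_iff₀' (by positivity)]
    exact Int.le_ceil _
  · rw [div_le_iff₀' (by positivity), mul_add, mul_inv_cancel₀ (by positivity)]
    exact (Int.ceil_lt_add_one _).le

end OrderedField

section MonoidHoms

variable {P R : Type*}

/-- The set `Hom_Mon(P, S)` of maps from an additively written monoid `P` to a multiplicative
monoid `R` that are homomorphisms and take values in `S`. It is a set of functions, so that it
carries the topology of pointwise convergence. -/
def monoidHomsInto (P : Type*) [AddZeroClass P] [MulOneClass R] (S : Set R) : Set (P → R) :=
  {f | (∀ χ, f χ ∈ S) ∧ f 0 = 1 ∧ ∀ a b, f (a + b) = f a * f b}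

lemma monoidHomsInto_mono [AddZeroClass P] [MulOneClass R] {S T : Set R} (hST : S ⊆ T) :
    monoidHomsInto P S ⊆ monoidHomsInto P T :=
  fun _ hf => ⟨fun χ => hST (hf.1 χ), hf.2⟩

lemma isCompact_monoidHomsInto [AddZeroClass P] [MulOneClass R] [TopologicalSpace R] [T2Space R]
    [ContinuousMul R] {S : Set R} (hS : IsCompact S) : IsCompact (monoidHomsInto P S) := by
  have hhom : IsClosed {f : P → R | f 0 = 1 ∧ ∀ a b, f (a + b) = f a * f b} :=
    (isClosed_setOfPred_map_one (Multiplicative P) R).inter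
      (isClosed_setOfPred_map_mul (Multiplicative P) R)
  have heq : monoidHomsInto P S =
      Set.univ.pi (fun _ => S) ∩ {f : P → R | f 0 = 1 ∧ ∀ a b, f (a + b) = f a * f b} := by
    ext f
    simp [monoidHomsInto]
  rw [heq]
  exact (isCompact_univ_pi fun _ => hS).inter_right hhom

lemma map_sum_nsmul_of_mem_monoidHomsInto [AddCommMonoid P] [CommMonoid R] {S : Set R}
    {f : P → R} (hf : f ∈ monoidHomsInto P S) {ι : Type*} (s : Finset ι) (k : ι → ℕ) (x : ι → P) :
    f (∑ i ∈ s, k i • x i) = ∏ i ∈ s, f (x i) ^ k i := by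
  let F : Multiplicative P →* R :=
    { toFun := fun a => f a.toAdd, map_one' := hf.2.1, map_mul' := hf.2.2 }
  change F (∏ i ∈ s, .ofAdd (x i) ^ k i) = _
  simp only [map_prod, map_pow]
  rfl

end MonoidHoms

section Differences

variable {X A : Type*} [AddCommGroup X] [AddCommGroup A] {M : AddSubmonoid X}
  (hgen : ∀ χ : X, ∃ χ₁ ∈ M, ∃ χ₂ ∈ M, χ = χ₁ - χ₂)

include hgen

lemma addMonoidHom_eq_of_eqOn {v w : X →+ A} (h : Set.EqOn v w M) : v = w := by
  ext χ
  obtain ⟨a, ha, b, hb, rfl⟩ := hgen χ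
  rw [map_sub, map_sub, h ha, h hb]

lemma exists_addMonoidHom_extending (g : M →+ A) : ∃ v : X →+ A, ∀ χ : M, v χ = g χ := by
  let i : (⊤ : AddSubmonoid M).LocalizationMap X :=
    M.subtype.toLocalizationMap (fun _ => AddGroup.isAddUnit _)
      (fun z => by
        obtain ⟨a, ha, b, hb, rfl⟩ := hgen z
        exact ⟨⟨⟨a, ha⟩, ⟨b, hb⟩, trivial⟩, sub_add_cancel a b⟩)
      (fun x y h => ⟨0, by rw [Subtype.ext h]⟩)
  exact ⟨i.lift fun _ => AddGroup.isAddUnit (g _), i.lift_eq _⟩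

end Differences

section PolarCone

variable {X : Type*} [AddCommGroup X] {M : AddSubmonoid X}

/-- The cone of points of `Hom(X, ℝ_{>0})` at which all characters in `M` are at most `1`, written
in logarithmic coordinates. -/
def polarCone (M : AddSubmonoid X) : PointedCone ℝ (X →+ ℝ) where
  carrier := {v | ∀ χ ∈ M, v χ ≤ 0}
  zero_mem' := fun _ _ => le_rfl
  add_mem' := fun hv hw χ hχ => add_nonpos (hv χ hχ) (hw χ hχ)
  smul_mem' := fun c _ hv χ hχ => mul_nonpos_of_nonneg_of_nonpos c.2 (hv χ hχ)

/-- The canonical map `u ↦ (χ ↦ ⟨χ, u⟩)` from `Hom(X, ℝ_{>0})` to functions on `M`, where the point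
`u` is given by its logarithm `v`. -/
noncomputable def charEval (M : AddSubmonoid X) (v : X →+ ℝ) : M → ℝ :=
  fun χ => Real.exp (v χ)

lemma charEval_mem_monoidHomsInto_iff {v : X →+ ℝ} :
    charEval M v ∈ monoidHomsInto M (Set.Ioc (0 : ℝ) 1) ↔ v ∈ polarCone M := by
  refine ⟨fun h χ hχ => Real.exp_le_one_iff.1 (h.1 ⟨χ, hχ⟩).2, fun hv => ⟨fun χ => ?_, ?_, ?_⟩⟩
  · exact ⟨Real.exp_pos _, Real.exp_le_one_iff.2 (hv χ χ.2)⟩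
  · simp [charEval]
  · simp [charEval, Real.exp_add]

section Generating

variable (hgen : ∀ χ : X, ∃ χ₁ ∈ M, ∃ χ₂ ∈ M, χ = χ₁ - χ₂)

include hgen

lemma charEval_injective : Function.Injective (charEval M) := fun _ _ h =>
  addMonoidHom_eq_of_eqOn hgen fun χ hχ => Real.exp_injective (congrFun h ⟨χ, hχ⟩)

lemma exists_charEval_eq {f : M → ℝ} (hf : f ∈ monoidHomsInto M (Set.Ioi (0 : ℝ))) :
    ∃ v, charEval M v = f := by
  let logf : M →+ ℝ :=
    { toFun := fun χ => Real.log (f χ)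
      map_zero' := by rw [hf.2.1, Real.log_one]
      map_add' := fun a b => by rw [hf.2.2, Real.log_mul (hf.1 a).ne' (hf.1 b).ne'] }
  obtain ⟨v, hv⟩ := exists_addMonoidHom_extending hgen logf
  exact ⟨v, funext fun χ => (congrArg Real.exp (hv χ)).trans (Real.exp_log (hf.1 χ))⟩

lemma bijOn_charEval :
    Set.BijOn (charEval M) (polarCone M) (monoidHomsInto M (Set.Ioc (0 : ℝ) 1)) := by
  refine ⟨fun v hv => charEval_mem_monoidHomsInto_iff.2 hv, (charEval_injective hgen).injOn,
    fun f hf => ?_⟩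
  obtain ⟨v, rfl⟩ := exists_charEval_eq hgen (monoidHomsInto_mono Set.Ioc_subset_Ioi_self hf)
  exact ⟨v, charEval_mem_monoidHomsInto_iff.1 hf, rfl⟩

end Generating

end PolarCone

section Relations

variable {X ι : Type*} [AddCommGroup X] [Fintype ι] {M : AddSubmonoid X}

lemma mul_prod_pow_eq_prod_pow {R : Type*} [CommMonoid R] {S : Set R} {f : M → R}
    (hf : f ∈ monoidHomsInto M S) (x : ι → M) (m : ι → ℤ) (w : M)
    (hw : (w : X) = ∑ i, m i • (x i : X)) :
    f w * ∏ i, f (x i) ^ (-m i).toNat = ∏ i, f (x i) ^ (m i).toNat := by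
  rw [← map_sum_nsmul_of_mem_monoidHomsInto hf, ← map_sum_nsmul_of_mem_monoidHomsInto hf, ← hf.2.2]
  congr 1
  apply Subtype.ext
  push_cast
  rw [hw, ← eq_sub_iff_add_eq, ← Finset.sum_sub_distrib]
  refine Finset.sum_congr rfl fun i _ => ?_
  rw [← natCast_zsmul, ← natCast_zsmul, ← sub_smul, Int.toNat_sub_toNat_neg]

variable {f : M → ℝ}

lemma eq_zero_and_sum_mul_log_nonpos_of_sum_zsmul_mem
    (hf : f ∈ monoidHomsInto M (Set.Icc (0 : ℝ) 1)) (x : ι → M) (m : ι → ℤ)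
    (hm : ∑ i, m i • (x i : X) ∈ M) (hm0 : ∀ i, f (x i) = 0 → m i ≤ 0) :
    (∀ i, f (x i) = 0 → m i = 0) ∧ ∑ i, (m i : ℝ) * Real.log (f (x i)) ≤ 0 := by
  have hrel := mul_prod_pow_eq_prod_pow hf x m ⟨_, hm⟩ rfl
  have hnum : ∀ i, f (x i) ^ (m i).toNat ≠ 0 := fun i h => by
    have hi := hm0 i (eq_zero_of_pow_eq_zero h)
    simp [Int.toNat_of_nonpos hi] at h
  have hprod : f ⟨_, hm⟩ * ∏ i, f (x i) ^ (-m i).toNat ≠ 0 :=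
    hrel.trans_ne (Finset.prod_ne_zero_iff.2 fun i _ => hnum i)
  have hden : ∀ i, f (x i) ^ (-m i).toNat ≠ 0 := fun i =>
    Finset.prod_ne_zero_iff.1 (right_ne_zero_of_mul hprod) i (Finset.mem_univ i)
  refine ⟨fun i hi => ?_, ?_⟩
  · have : (-m i).toNat = 0 := by
      by_contra h
      exact hden i (by rw [hi, zero_pow h])
    have := hm0 i hi
    omega
  · have hlog := congrArg Real.log hrel
    rw [Real.log_mul (left_ne_zero_of_mul hprod) (right_ne_zero_of_mul hprod),
      Real.log_prod fun i _ => hden i, Real.log_prod fun i _ => hnum i,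
      ← eq_sub_iff_add_eq, ← Finset.sum_sub_distrib] at hlog
    calc ∑ i, (m i : ℝ) * Real.log (f (x i))
        = Real.log (f ⟨_, hm⟩) := by
          rw [hlog]
          refine Finset.sum_congr rfl fun i _ => ?_
          rw [Real.log_pow, Real.log_pow, ← sub_mul]
          congr 1
          exact_mod_cast (m i).toNat_sub_toNat_neg.symm
      _ ≤ 0 := Real.log_nonpos (hf.1 _).1 (hf.1 _).2

lemma eq_zero_and_dotProduct_log_nonpos_of_polarCone
    (hM : ∀ χ, (∀ v ∈ polarCone M, v χ ≤ 0) → χ ∈ M)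
    (hf : f ∈ monoidHomsInto M (Set.Icc (0 : ℝ) 1)) (x : ι → M) (c : ι → ℝ)
    (hc : ∀ v ∈ polarCone M, (c ⬝ᵥ fun i => v (x i)) ≤ 0) (hc0 : ∀ i, f (x i) = 0 → c i ≤ 0) :
    (∀ i, f (x i) = 0 → c i = 0) ∧ (c ⬝ᵥ fun i => Real.log (f (x i))) ≤ 0 := by
  have hmem : ∀ N : ℕ, ∑ i, ⌈N * c i⌉ • (x i : X) ∈ M := fun N => hM _ fun v hv => by
    calc v (∑ i, ⌈N * c i⌉ • (x i : X))
        = ∑ i, (⌈N * c i⌉ : ℝ) * v (x i) := by simp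
      _ ≤ ∑ i, N * c i * v (x i) := Finset.sum_le_sum fun i _ =>
          mul_le_mul_of_nonpos_right (Int.le_ceil _) (hv _ (x i).2)
      _ = N * (c ⬝ᵥ fun i => v (x i)) := by simp only [dotProduct, Finset.mul_sum, mul_assoc]
      _ ≤ 0 := mul_nonpos_of_nonneg_of_nonpos N.cast_nonneg (hc v hv)
  have hceil := fun N : ℕ =>
    eq_zero_and_sum_mul_log_nonpos_of_sum_zsmul_mem hf x (fun i => ⌈N * c i⌉) (hmem N)
      fun i hi => Int.ceil_le.2 <| by
        simpa using mul_nonpos_of_nonneg_of_nonpos N.cast_nonneg (hc0 i hi)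
  refine ⟨fun i hi => ?_, ?_⟩
  · refine tendsto_nhds_unique (tendsto_ceil_natCast_mul_div (c i)) ?_
    simp [(hceil _).1 i hi]
  · refine le_of_tendsto' (tendsto_finsetSum _ fun i _ =>
      (tendsto_ceil_natCast_mul_div (c i)).mul_const (Real.log (f (x i)))) fun N => ?_
    simp only [div_mul_eq_mul_div, ← Finset.sum_div]
    exact div_nonpos_of_nonpos_of_nonneg (hceil N).2 N.cast_nonneg

end Relations

section Separation

lemma exists_strongDual_nonpos_and_pos {E : Type*} [AddCommGroup E] [Module ℝ E]
    [TopologicalSpace E] [IsTopologicalAddGroup E] [ContinuousSMul ℝ E] (A : PointedCone ℝ E)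
    {B : Set E} (hBconv : Convex ℝ B) (hBopen : IsOpen B) (hdisj : Disjoint B A) :
    ∃ φ : StrongDual ℝ E, (∀ y ∈ A, φ y ≤ 0) ∧ ∀ y ∈ B, 0 < φ y := by
  obtain ⟨ψ, s, hψB, hψA⟩ := geometric_hahn_banach_open hBconv hBopen A.convex hdisj
  have hs : s ≤ 0 := (hψA 0 A.zero_mem).trans_eq (map_zero ψ)
  refine ⟨-ψ, fun y hy => ?_, fun y hy => neg_pos.2 ((hψB y hy).trans_le hs)⟩
  refine neg_nonpos.2 (nonneg_of_forall_le_add_mul (a := 0) (s := s) fun t ht => ?_)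
  simpa using hψA (t • y) (A.smul_mem ht hy)

variable {ι : Type*} [Fintype ι] {a : ι → ℝ} {ε : ℝ}

lemma convex_preimage_exp_ball (a : ι → ℝ) (hε : 0 < ε) :
    Convex ℝ ((Real.exp ∘ · : (ι → ℝ) → ι → ℝ) ⁻¹' Metric.ball a ε) := by
  have hpi : (Real.exp ∘ · : (ι → ℝ) → ι → ℝ) ⁻¹' Metric.ball a ε =
      Set.univ.pi fun i => Real.exp ⁻¹' Metric.ball (a i) ε := by
    rw [ball_pi _ hε]
    rfl
  rw [hpi]
  refine convex_pi fun i _ => Set.OrdConnected.convex ?_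
  rw [Real.ball_eq_Ioo]
  exact Set.ordConnected_Ioo.preimage_mono Real.exp_monotone

lemma exists_exp_comp_mem_ball (ha : ∀ i, 0 ≤ a i) (hε : 0 < ε) :
    ∃ y : ι → ℝ, Real.exp ∘ y ∈ Metric.ball a ε ∧ ∀ i, a i ≠ 0 → y i = Real.log (a i) := by
  classical
  refine ⟨fun i => if a i = 0 then Real.log (ε / 2) else Real.log (a i), ?_, fun i hi => if_neg hi⟩
  refine (dist_pi_lt_iff hε).2 fun i => ?_
  by_cases hi : a i = 0
  · simp [hi, Real.exp_log (half_pos hε), abs_of_pos hε, hε]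
  · simp [hi, Real.exp_log ((ha i).lt_of_ne' hi), hε]

lemma exp_comp_mem_ball_of_le {y z : ι → ℝ} (hy : Real.exp ∘ y ∈ Metric.ball a ε)
    (hle : z ≤ y) (heq : ∀ i, a i ≠ 0 → z i = y i) : Real.exp ∘ z ∈ Metric.ball a ε := by
  have hε := Metric.pos_of_mem_ball hy
  refine (dist_pi_lt_iff hε).2 fun i => lt_of_le_of_lt ?_ ((dist_pi_lt_iff hε).1 hy i)
  by_cases hi : a i = 0
  · simpa [hi] using hle i
  · simp [heq i hi]

-- `Real.log 0 = 0`, so the last condition on `c` only sees the coordinates where `a i ≠ 0`.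
lemma mem_closure_exp_image (A : PointedCone ℝ (ι → ℝ)) (ha : ∀ i, 0 ≤ a i)
    (h : ∀ c : ι → ℝ, (∀ y ∈ A, c ⬝ᵥ y ≤ 0) → (∀ i, a i = 0 → c i ≤ 0) →
      (∀ i, a i = 0 → c i = 0) ∧ c ⬝ᵥ (Real.log ∘ a) ≤ 0) :
    a ∈ closure ((Real.exp ∘ ·) '' (A : Set (ι → ℝ))) := by
  classical
  refine Metric.mem_closure_iff.2 fun ε hε => ?_
  by_contra! hfar
  let B : Set (ι → ℝ) := (Real.exp ∘ ·) ⁻¹' Metric.ball a ε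
  have hBopen : IsOpen B := Metric.isOpen_ball.preimage (by fun_prop)
  have hdisj : Disjoint B A := Set.disjoint_left.2 fun y hyB hyA =>
    (hfar _ ⟨y, hyA, rfl⟩).not_gt (Metric.mem_ball'.1 hyB)
  obtain ⟨φ, hφA, hφB⟩ :=
    exists_strongDual_nonpos_and_pos A (convex_preimage_exp_ball a hε) hBopen hdisj
  obtain ⟨c, hc⟩ := (dotProductEquiv ℝ ι).surjective φ.toLinearMap
  replace hc : ∀ y, φ y = c ⬝ᵥ y := fun y => (LinearMap.congr_fun hc y).symm
  simp only [hc] at hφA hφB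
  obtain ⟨y, hyB, hylog⟩ := exists_exp_comp_mem_ball ha hε
  -- `B` recedes to `-∞` in the coordinates where `a i = 0`.
  have hc_nonpos : ∀ i, a i = 0 → c i ≤ 0 := fun i hi => by
    refine neg_nonneg.1 (nonneg_of_forall_le_add_mul (a := c ⬝ᵥ y) (s := 0) fun t ht => ?_)
    have hmem : y - Pi.single i t ∈ B := by
      refine exp_comp_mem_ball_of_le hyB (sub_le_self _ (Pi.single_nonneg.2 ht)) fun j hj => ?_
      have hji : j ≠ i := fun hji => hj (hji ▸ hi)
      simp [hji]
    have hpos := hφB _ hmem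
    rw [dotProduct_sub, dotProduct_single] at hpos
    linarith
  obtain ⟨hc_zero, hlog⟩ := h c hφA hc_nonpos
  have hylog' : c ⬝ᵥ y = c ⬝ᵥ (Real.log ∘ a) := Finset.sum_congr rfl fun i _ => by
    by_cases hi : a i = 0
    · simp [hc_zero i hi]
    · simp [hylog i hi]
  exact (hφB y hyB).not_ge (hylog'.trans_le hlog)

end Separation

section Density

variable {X : Type*} [AddCommGroup X]

lemma monoidHomsInto_Icc_subset_closure {M : AddSubmonoid X}
    (hM : ∀ χ, (∀ v ∈ polarCone M, v χ ≤ 0) → χ ∈ M) :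
    monoidHomsInto M (Set.Icc (0 : ℝ) 1) ⊆ closure (charEval M '' polarCone M) := by
  refine fun f hf => mem_closure_of_forall_restrict fun I => ?_
  let eval : (X →+ ℝ) →ₗ[ℝ] (I → ℝ) :=
    { toFun := fun v i => v i, map_add' := fun _ _ => rfl, map_smul' := fun _ _ => rfl }
  have himage : I.restrict '' (charEval M '' polarCone M) =
      (Real.exp ∘ ·) '' ((polarCone M).map eval : Set (I → ℝ)) := by
    rw [PointedCone.coe_map, Set.image_image, Set.image_image]
    rfl
  rw [himage]
  refine mem_closure_exp_image _ (fun i => (hf.1 i).1) fun c hc hc0 =>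
    eq_zero_and_dotProduct_log_nonpos_of_polarCone hM hf (fun i : I => i.1) c (fun v hv => ?_) hc0
  exact hc _ (PointedCone.mem_map.2 ⟨v, hv, rfl⟩)

theorem cone_compactification_hom_monoid_general (M : AddSubmonoid X)
    (hM : ∀ χ, (∀ v ∈ polarCone M, v χ ≤ 0) → χ ∈ M)
    (hgen : ∀ χ : X, ∃ χ₁ ∈ M, ∃ χ₂ ∈ M, χ = χ₁ - χ₂) :
    Set.BijOn (charEval M) (polarCone M) (monoidHomsInto M (Set.Ioc (0 : ℝ) 1)) ∧
      IsCompact (monoidHomsInto M (Set.Icc (0 : ℝ) 1)) ∧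
      charEval M '' polarCone M ⊆ monoidHomsInto M (Set.Icc (0 : ℝ) 1) ∧
      monoidHomsInto M (Set.Icc (0 : ℝ) 1) ⊆ closure (charEval M '' polarCone M) :=
  ⟨bijOn_charEval hgen, isCompact_monoidHomsInto isCompact_Icc,
    (bijOn_charEval hgen).image_eq.trans_subset (monoidHomsInto_mono Set.Ioc_subset_Icc_self),
    monoidHomsInto_Icc_subset_closure hM⟩

end Density

section Coordinates

variable {ι : Type*} [DecidableEq ι]

/-- The point of `ℝ_{>0}^ι = Hom(ℤ^ι, ℝ_{>0})` with logarithm `v`, given by its values on the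
standard basis. -/
noncomputable def expPoint (v : (ι → ℤ) →+ ℝ) : ι → ℝ :=
  fun i => Real.exp (v (Pi.single i 1))

lemma prod_expPoint_zpow [Fintype ι] (v : (ι → ℤ) →+ ℝ) (χ : ι → ℤ) :
    ∏ i, expPoint v i ^ χ i = Real.exp (v χ) := by
  conv_rhs => rw [pi_eq_sum_univ' χ, map_sum, Real.exp_sum]
  refine Finset.prod_congr rfl fun i _ => ?_
  rw [map_zsmul, zsmul_eq_mul, mul_comm, Real.exp_mul, Real.rpow_intCast, expPoint]

lemma exists_expPoint_eq [Finite ι] {u : ι → ℝ} (hu : ∀ i, 0 < u i) : ∃ v, expPoint v = u := by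
  refine ⟨((Pi.basisFun ℤ ι).constr ℤ fun i => Real.log (u i)).toAddMonoidHom, funext fun i => ?_⟩
  have hi := (Pi.basisFun ℤ ι).constr_basis ℤ (fun i => Real.log (u i)) i
  rw [Pi.basisFun_apply] at hi
  exact (congrArg Real.exp hi).trans (Real.exp_log (hu i))

lemma eq_expPoint_image_polarCone [Fintype ι] {C : Set (ι → ℝ)} {M : AddSubmonoid (ι → ℤ)}
    (hC : ∀ u, u ∈ C ↔ (∀ i, 0 < u i) ∧ ∀ χ ∈ M, ∏ i, u i ^ χ i ≤ 1) :
    C = expPoint '' polarCone M := by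
  have hmem : ∀ v, expPoint v ∈ C ↔ v ∈ polarCone M := fun v => by
    simp only [hC, prod_expPoint_zpow, Real.exp_le_one_iff]
    exact and_iff_right fun i => Real.exp_pos _
  refine subset_antisymm (fun u hu => ?_) (Set.image_subset_iff.2 fun v hv => (hmem v).2 hv)
  obtain ⟨v, rfl⟩ := exists_expPoint_eq ((hC u).1 hu).1
  exact ⟨v, (hmem v).1 hu, rfl⟩

end Coordinates

/-- let `C ⊂ Λ = Hom(X*, ℝ_{>0})` be a strictly convex rational polyhedral cone
(here `X* = ℤⁿ`, a point `u ∈ Λ` is identified with its tuple of positive values on the standard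
basis, and the pairing is `⟨χ,u⟩ = ∏ᵢ uᵢ^{χᵢ}`), with associated semigroup
`M = {χ : ⟨χ,u⟩ ≤ 1 for all u ∈ C}`; strict convexity is encoded by `M - M = X*`, and
polyhedrality by the biduality `C = {u > 0 : ⟨χ,u⟩ ≤ 1 ∀ χ ∈ M}`. Then the canonical map
`Θ : u ↦ (χ ↦ ⟨χ,u⟩)` is a bijection of `C` onto the set of monoid homomorphisms
`Hom_Mon(M, (0,1])`, and `C̄ = Hom_Mon(M, [0,1])` (with the topology of pointwise convergence)
is compact and contains the image of `C` as a dense subset. -/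
theorem cone_compactification_hom_monoid
    (n : ℕ) (C : Set (Fin n → ℝ))
    (hpos : ∀ u ∈ C, ∀ i, 0 < u i)
    (Msub : AddSubmonoid (Fin n → ℤ))
    (hM : ∀ χ : Fin n → ℤ, χ ∈ Msub ↔ ∀ u ∈ C, (∏ i, u i ^ χ i) ≤ 1)
    (hCdual : ∀ u : Fin n → ℝ,
      u ∈ C ↔ ((∀ i, 0 < u i) ∧ ∀ χ ∈ Msub, (∏ i, u i ^ χ i) ≤ 1))
    (hgen : ∀ χ : Fin n → ℤ, ∃ χ₁ ∈ Msub, ∃ χ₂ ∈ Msub, χ = χ₁ - χ₂)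
    (Θ : (Fin n → ℝ) → (↥Msub → ℝ))
    (hΘ : ∀ u, ∀ χ : ↥Msub, Θ u χ = ∏ i, u i ^ (χ : Fin n → ℤ) i) :
    Set.BijOn Θ C
      {f : ↥Msub → ℝ | (∀ χ, f χ ∈ Set.Ioc (0 : ℝ) 1) ∧ f 0 = 1 ∧
        ∀ a b : ↥Msub, f (a + b) = f a * f b} ∧
    IsCompact {f : ↥Msub → ℝ | (∀ χ, f χ ∈ Set.Icc (0 : ℝ) 1) ∧ f 0 = 1 ∧
        ∀ a b : ↥Msub, f (a + b) = f a * f b} ∧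
    Θ '' C ⊆ {f : ↥Msub → ℝ | (∀ χ, f χ ∈ Set.Icc (0 : ℝ) 1) ∧ f 0 = 1 ∧
        ∀ a b : ↥Msub, f (a + b) = f a * f b} ∧
    {f : ↥Msub → ℝ | (∀ χ, f χ ∈ Set.Icc (0 : ℝ) 1) ∧ f 0 = 1 ∧
        ∀ a b : ↥Msub, f (a + b) = f a * f b} ⊆ closure (Θ '' C) := by
  obtain rfl := eq_expPoint_image_polarCone hCdual
  have hcomp : Θ ∘ expPoint = charEval Msub :=
    funext₂ fun v χ => (hΘ _ χ).trans (prod_expPoint_zpow v χ)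
  have hsat : ∀ χ, (∀ v ∈ polarCone Msub, v χ ≤ 0) → χ ∈ Msub := fun χ h => by
    refine (hM χ).2 (Set.forall_mem_image.2 fun v hv => ?_)
    rw [prod_expPoint_zpow, Real.exp_le_one_iff]
    exact h v hv
  rw [← Set.image_comp, hcomp]
  obtain ⟨hbij, hrest⟩ := cone_compactification_hom_monoid_general Msub hsat hgen
  exact ⟨bijOn_image_of_comp (hcomp ▸ hbij), hrest⟩
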